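/- Let f : 2^V → ℝ be a symmetric submodular function on a finite set V of cardinality n ≥ 2, and let (v_1, …, v_n) be a maximum adjacency ordering (MA-ordering) of V with respect to f. Then (v_{n−1}, v_n) is a pendent pair of f, i.e., f(X) ≥ f({v_n}) for every subset X ⊊ V with |X ∩ {v_{n−1}, v_n}| = 1. -/

import Mathlib

open Finset

def Submodular {V : Type*} [DecidableEq V] [Fintype V] (f : Finset V → ℝ) : Prop :=
  ∀ X Y : Finset V, f X + f Y ≥ f (X ∪ Y) + f (X ∩ Y)

def prefSet {V : Type*} [DecidableEq V] {n : ℕ} (v : Fin n → V) (i : Fin n) : Finset V :=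
  (Finset.univ.filter (fun k : Fin n => k < i)).image v

/-- An ordering `(v 0, …, v (n-1))` of `V` is a maximum adjacency ordering (MA-ordering)
with respect to `f` if `f {v_i} - f (V_{i-1} ∪ {v_i}) ≥ f {v_j} - f (V_{i-1} ∪ {v_j})`
for all `i ≤ j`. -/
def IsMAOrdering {V : Type*} [DecidableEq V] {n : ℕ} (f : Finset V → ℝ) (v : Fin n → V) : Prop :=
  ∀ i j : Fin n, i ≤ j →
    f {v i} - f (insert (v i) (prefSet v i)) ≥
      f {v j} - f (insert (v j) (prefSet v i))

/-- A pair `(u, w)` of distinct elements of `V` is a pendent pair of `f` if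
`f X ≥ f {w}` for every `X ⊊ V` with `|X ∩ {u, w}| = 1`. -/
def PendentPair {V : Type*} [DecidableEq V] [Fintype V]
    (f : Finset V → ℝ) (u w : V) : Prop :=
  ∀ X : Finset V, X ⊂ Finset.univ → (X ∩ ({u, w} : Finset V)).card = 1 → f {w} ≤ f X

/-! Let `P_i = {v_0, …, v_{i-1}}`. By induction on `i`, every splitting of `P_i` into `P_i \ X` and
`X` satisfies `f (P_i + v_i) + f {v_j} ≤ f (P_i \ X + v_i) + f (X + v_j)` whenever `i < j`. In the
step to `i + 1`, if `v_i ∉ X` the induction hypothesis applies to `X` and `v_j`, and adding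
`v_{i+1}` costs nothing by submodularity; if `v_i ∈ X` it applies to the other part and `v_{i+1}`,
and the MA-ordering allows replacing `v_{i+1}` by `v_j`. For `v_i, v_j` the last two elements, the
first and third sets are the complements of the second and fourth, so by symmetry the inequality
reads `2 f {v_j} ≤ 2 f (X + v_j)`. -/

section Prefix

variable {V : Type*} [DecidableEq V]

lemma prefSet_zero {n : ℕ} (v : Fin (n + 1) → V) : prefSet v 0 = ∅ := by
  simp [prefSet]

lemma prefSet_succ {n : ℕ} (v : Fin (n + 1) → V) (i : Fin n) :
    prefSet v i.succ = insert (v i.castSucc) (prefSet v i.castSucc) := by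
  have filter_lt_succ : univ.filter (· < i.succ) =
      insert i.castSucc (univ.filter (· < i.castSucc)) := by
    ext k
    simp [Fin.lt_def, Fin.ext_iff, le_iff_eq_or_lt]
  rw [prefSet, prefSet, filter_lt_succ, image_insert]

lemma apply_mem_prefSet_iff {n : ℕ} {v : Fin n → V} (hv : Function.Injective v) {i j : Fin n} :
    v j ∈ prefSet v i ↔ j < i := by
  simp [prefSet, hv.eq_iff]

lemma prefSet_last [Fintype V] {n : ℕ} {v : Fin (n + 1) → V} (hv : Function.Bijective v) :
    prefSet v (Fin.last n) = {v (Fin.last n)}ᶜ := by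
  ext x
  obtain ⟨j, rfl⟩ := hv.surjective x
  simp [apply_mem_prefSet_iff hv.injective, hv.injective.eq_iff, Fin.lt_last_iff_ne_last]

end Prefix

lemma mem_iff_notMem_of_card_inter_pair_eq_one {V : Type*} [DecidableEq V] {X : Finset V}
    {a b : V} (hab : a ≠ b) (hX : (X ∩ {a, b}).card = 1) : a ∈ X ↔ b ∉ X := by
  by_cases ha : a ∈ X <;> by_cases hb : b ∈ X <;>
    simp_all [inter_insert_of_mem, inter_insert_of_notMem]

lemma submodular_insert_add_le_insert_add {V α : Type*} [DecidableEq V] [Add α] [LE α]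
    {f : Finset V → α} (hf : ∀ X Y, f (X ∪ Y) + f (X ∩ Y) ≤ f X + f Y) {S T : Finset V}
    (hST : S ⊆ T) {a : V} (ha : a ∉ T) : f (insert a T) + f S ≤ f (insert a S) + f T := by
  have union_eq : insert a S ∪ T = insert a T := by rw [insert_union, union_eq_right.2 hST]
  have inter_eq : insert a S ∩ T = S := by rw [insert_inter_of_notMem ha, inter_eq_left.2 hST]
  simpa only [union_eq, inter_eq] using hf (insert a S) T

section OrderedGroup

variable {V α : Type*} [DecidableEq V] [AddCommGroup α]

lemma maOrdering_add_le_add_of_subset_prefSet [PartialOrder α] [IsOrderedAddMonoid α] {n : ℕ}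
    {f : Finset V → α} (hf : ∀ X Y, f (X ∪ Y) + f (X ∩ Y) ≤ f X + f Y)
    {v : Fin (n + 1) → V} (hv : Function.Injective v)
    (hord : ∀ i j, i ≤ j →
      f {v j} - f (insert (v j) (prefSet v i)) ≤ f {v i} - f (insert (v i) (prefSet v i)))
    {i j : Fin (n + 1)} (hij : i < j) {X : Finset V} (hX : X ⊆ prefSet v i) :
    f (insert (v i) (prefSet v i)) + f {v j} ≤
      f (insert (v i) (prefSet v i \ X)) + f (insert (v j) X) := by
  induction i using Fin.induction generalizing j X with
  | zero =>
    obtain rfl : X = ∅ := by simpa [prefSet_zero] using hX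
    simp
  | succ i ih =>
    have hw : v i.succ ∉ prefSet v i.succ := by simp [apply_mem_prefSet_iff hv]
    have hu : v j ∉ prefSet v i.succ := by simpa [apply_mem_prefSet_iff hv] using hij.le
    have hQ := prefSet_succ v i
    set P := prefSet v i.castSucc
    set Q := prefSet v i.succ
    by_cases hzX : v i.castSucc ∈ X
    · have swap_parts : f Q + f {v i.succ} ≤ f X + f (insert (v i.succ) (Q \ X)) := by
        have sdiff_complement : insert (v i.castSucc) (P \ (Q \ X)) = X := by grind
        simpa only [← hQ, sdiff_complement] using ih i.castSucc_lt_succ (X := Q \ X) (by grind)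
      have insert_last := submodular_insert_add_le_insert_add hf hX hu
      have max_adj := sub_le_sub_iff.1 (hord i.succ j hij.le)
      refine le_of_add_le_add_right (a := f Q + f X) ?_
      calc f (insert (v i.succ) Q) + f {v j} + (f Q + f X)
          = (f {v j} + f (insert (v i.succ) Q)) + (f Q + f X) := by abel
        _ ≤ (f {v i.succ} + f (insert (v j) Q)) + (f Q + f X) := by gcongr
        _ = (f Q + f {v i.succ}) + (f (insert (v j) Q) + f X) := by abel
        _ ≤ (f X + f (insert (v i.succ) (Q \ X))) + (f (insert (v j) X) + f Q) := by gcongr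
        _ = f (insert (v i.succ) (Q \ X)) + f (insert (v j) X) + (f Q + f X) := by abel
    · have shorter_prefix : f Q + f {v j} ≤ f (Q \ X) + f (insert (v j) X) := by
        simpa only [hQ, insert_sdiff_of_notMem _ hzX] using
          ih (i.castSucc_lt_succ.trans hij) (X := X) (by grind)
      have insert_next := submodular_insert_add_le_insert_add hf (sdiff_subset (s := Q) (t := X)) hw
      refine le_of_add_le_add_right (a := f Q + f (Q \ X)) ?_
      calc f (insert (v i.succ) Q) + f {v j} + (f Q + f (Q \ X))
          = (f (insert (v i.succ) Q) + f (Q \ X)) + (f Q + f {v j}) := by abel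
        _ ≤ (f (insert (v i.succ) (Q \ X)) + f Q) + (f (Q \ X) + f (insert (v j) X)) := by gcongr
        _ = f (insert (v i.succ) (Q \ X)) + f (insert (v j) X) + (f Q + f (Q \ X)) := by abel

variable [LinearOrder α] [IsOrderedAddMonoid α] [Fintype V] {n : ℕ}

lemma maOrdering_apply_last_le_of_mem_of_notMem {f : Finset V → α} (hsym : ∀ X, f X = f Xᶜ)
    (hf : ∀ X Y, f (X ∪ Y) + f (X ∩ Y) ≤ f X + f Y)
    {v : Fin (n + 2) → V} (hv : Function.Bijective v)
    (hord : ∀ i j, i ≤ j →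
      f {v j} - f (insert (v j) (prefSet v i)) ≤ f {v i} - f (insert (v i) (prefSet v i)))
    {X : Finset V} (hlast : v (Fin.last (n + 1)) ∈ X)
    (hpenult : v (Fin.last n).castSucc ∉ X) : f {v (Fin.last (n + 1))} ≤ f X := by
  set a := v (Fin.last n).castSucc
  set b := v (Fin.last (n + 1))
  set P := prefSet v (Fin.last n).castSucc
  have all_but_last : insert a P = {b}ᶜ := by
    rw [← prefSet_succ, Fin.succ_last, prefSet_last hv]
  have ha : a ∉ X.erase b := mt mem_of_mem_erase hpenult
  have erase_subset : X.erase b ⊆ P := by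
    rw [← subset_insert_iff_of_notMem ha, all_but_last]
    exact subset_compl_singleton.2 (notMem_erase b X)
  have compl_eq : insert a (P \ X.erase b) = Xᶜ := by
    rw [← insert_sdiff_of_notMem _ ha, all_but_last, sdiff_eq_inter_compl, ← compl_union,
      ← insert_eq, insert_erase hlast]
  have split : f (insert a P) + f {b} ≤
      f (insert a (P \ X.erase b)) + f (insert b (X.erase b)) :=
    maOrdering_add_le_add_of_subset_prefSet hf hv.injective hord
      (Fin.castSucc_lt_last (Fin.last n)) erase_subset
  have doubled : f {b} + f {b} ≤ f X + f X := by
    simpa only [all_but_last, compl_eq, insert_erase hlast, ← hsym] using split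
  exact le_of_not_gt fun h ↦ (add_lt_add h h).not_ge doubled

theorem stmt_6_general {f : Finset V → α} (hsym : ∀ X, f X = f Xᶜ)
    (hf : ∀ X Y, f (X ∪ Y) + f (X ∩ Y) ≤ f X + f Y)
    {v : Fin (n + 2) → V} (hv : Function.Bijective v)
    (hord : ∀ i j, i ≤ j →
      f {v j} - f (insert (v j) (prefSet v i)) ≤ f {v i} - f (insert (v i) (prefSet v i)))
    {X : Finset V} (hX : (X ∩ {v (Fin.last n).castSucc, v (Fin.last (n + 1))}).card = 1) :
    f {v (Fin.last (n + 1))} ≤ f X := by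
  have separated := mem_iff_notMem_of_card_inter_pair_eq_one
    (hv.injective.ne (Fin.castSucc_lt_last (Fin.last n)).ne) hX
  by_cases hlast : v (Fin.last (n + 1)) ∈ X
  · exact maOrdering_apply_last_le_of_mem_of_notMem hsym hf hv hord hlast
      fun h ↦ separated.1 h hlast
  · rw [hsym X]
    exact maOrdering_apply_last_le_of_mem_of_notMem hsym hf hv hord (mem_compl.2 hlast)
      (notMem_compl.2 (separated.2 hlast))

end OrderedGroup

/-- Queyranne's theorem: for a symmetric submodular `f` and an MA-ordering
`(v_1, …, v_n)` of `V`, the pair `(v_{n-1}, v_n)` is a pendent pair. -/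
theorem stmt_6 {n : ℕ} (hn : 2 ≤ n) {V : Type*} [DecidableEq V] [Fintype V]
    (f : Finset V → ℝ) (hsym : ∀ X : Finset V, f X = f Xᶜ) (hf : Submodular f)
    (v : Fin n → V) (hv : Function.Bijective v)
    (hord : IsMAOrdering f v) :
    PendentPair f (v ⟨n - 2, by omega⟩) (v ⟨n - 1, by omega⟩) := by
  obtain ⟨m, rfl⟩ := Nat.exists_eq_add_of_le' hn
  exact fun _ _ hX ↦ stmt_6_general hsym hf hv hord hX
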